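/- arXiv:1904.11538 — 3 statements merged into one kernel-verified Lean document; each statement's English description precedes it below -/
import Mathlib

section
/- The dynamic programming operator F maps L²(π) to itself and has a unique fixed point Q* ∈ L²(π), i.e., there exists Q* ∈ L²(π) with F Q* = Q* (π-almost everywhere), and any two such fixed points agree π-almost everywhere. -/
open MeasureTheory ProbabilityTheory

/-!
Averaging against a Markov kernel `κ` does not increase `Lᵖ` norms, from `Lᵖ(κ ∘ₘ μ)` to `Lᵖ(μ)`:
by Jensen `|∫ f dκ(x)|` is at most the `Lᵖ(κ(x))` norm of `f`, and the `Lᵖ(μ)` norm of these norms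
is at most the `Lᵖ(κ ∘ₘ μ)` norm of `f`. For an invariant measure both spaces are `Lᵖ(π)`, and since
`t ↦ min(s, t)` is 1-Lipschitz the dynamic programming operator is a `|β|`-contraction of `Lᵖ(π)`,
so Banach's fixed point theorem applies.
-/

open scoped ENNReal NNReal

section KernelAverage

variable {X Y E : Type*} [MeasurableSpace X] [MeasurableSpace Y] [NormedAddCommGroup E]
  {κ : Kernel X Y} {μ : Measure X} {p : ℝ≥0∞} {f g : Y → E}

lemma ae_aestronglyMeasurable_of_aestronglyMeasurable_comp
    (hf : AEStronglyMeasurable f (κ ∘ₘ μ)) : ∀ᵐ x ∂μ, AEStronglyMeasurable f (κ x) := by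
  rw [Measure.comp_eq_comp_const_apply] at hf
  simpa only [Kernel.const_apply] using hf.comp

lemma ae_memLp_of_memLp_comp (hf : MemLp f p (κ ∘ₘ μ)) : ∀ᵐ x ∂μ, MemLp f p (κ x) := by
  have hmeas := ae_aestronglyMeasurable_of_aestronglyMeasurable_comp hf.1
  obtain rfl | hp₀ := eq_or_ne p 0
  · simpa only [memLp_zero_iff_aestronglyMeasurable] using hmeas
  obtain rfl | hp_top := eq_or_ne p ∞
  · have hbound : ∀ᵐ y ∂(κ ∘ₘ μ), ‖f y‖ₑ ≤ eLpNorm f ∞ (κ ∘ₘ μ) := by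
      simpa only [eLpNorm_exponent_top] using ae_le_eLpNormEssSup
    filter_upwards [hmeas, Measure.ae_ae_of_ae_comp hbound] with x hx hfx
    refine ⟨hx, ?_⟩
    rw [eLpNorm_exponent_top]
    exact (eLpNormEssSup_le_of_ae_enorm_bound hfx).trans_lt hf.2
  · have hint := Measure.ae_integrable_of_integrable_comp (hf.integrable_norm_rpow hp₀ hp_top)
    filter_upwards [hmeas, hint] with x hx hfx
    exact (integrable_norm_rpow_iff hx hp₀ hp_top).1 hfx

lemma eLpNorm_eLpNorm_kernel_le (hf : AEStronglyMeasurable f (κ ∘ₘ μ)) :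
    eLpNorm (fun x => eLpNorm f p (κ x)) p μ ≤ eLpNorm f p (κ ∘ₘ μ) := by
  obtain rfl | hp₀ := eq_or_ne p 0
  · simp only [eLpNorm_exponent_zero, le_refl]
  obtain rfl | hp_top := eq_or_ne p ∞
  · simp only [eLpNorm_exponent_top]
    refine eLpNormEssSup_le_of_ae_enorm_bound ?_
    filter_upwards [Measure.ae_ae_of_ae_comp (ae_le_eLpNormEssSup (f := f))] with x hx
    exact eLpNormEssSup_le_of_ae_enorm_bound hx
  · have hp : p.toReal ≠ 0 := ENNReal.toReal_ne_zero.2 ⟨hp₀, hp_top⟩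
    simp only [eLpNorm_eq_lintegral_rpow_enorm_toReal hp₀ hp_top, enorm_eq_self, one_div,
      ENNReal.rpow_inv_rpow hp]
    rw [Measure.lintegral_bind κ.aemeasurable (hf.enorm.pow_const _)]

variable [NormedSpace ℝ E] [IsMarkovKernel κ]

lemma eLpNorm_integral_kernel_le (hp : 1 ≤ p) (hf : AEStronglyMeasurable f (κ ∘ₘ μ)) :
    eLpNorm (fun x => ∫ y, f y ∂κ x) p μ ≤ eLpNorm f p (κ ∘ₘ μ) := by
  refine (eLpNorm_mono_enorm_ae ?_).trans (eLpNorm_eLpNorm_kernel_le hf)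
  filter_upwards [ae_aestronglyMeasurable_of_aestronglyMeasurable_comp hf] with x hx
  calc ‖∫ y, f y ∂κ x‖ₑ
      ≤ ∫⁻ y, ‖f y‖ₑ ∂κ x := enorm_integral_le_lintegral_enorm f
    _ = eLpNorm f 1 (κ x) := eLpNorm_one_eq_lintegral_enorm.symm
    _ ≤ eLpNorm f p (κ x) := eLpNorm_le_eLpNorm_of_exponent_le hp hx

lemma memLp_integral_kernel (hp : 1 ≤ p) (hf : MemLp f p (κ ∘ₘ μ)) :
    MemLp (fun x => ∫ y, f y ∂κ x) p μ := by
  refine ⟨?_, (eLpNorm_integral_kernel_le hp hf.1).trans_lt hf.2⟩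
  have hmeas := hf.1
  rw [Measure.comp_eq_comp_const_apply] at hmeas
  simpa only [Kernel.const_apply] using hmeas.integral_kernel_comp

lemma eLpNorm_integral_kernel_sub_le (hp : 1 ≤ p) (hf : MemLp f p (κ ∘ₘ μ))
    (hg : MemLp g p (κ ∘ₘ μ)) :
    eLpNorm (fun x => ∫ y, f y ∂κ x - ∫ y, g y ∂κ x) p μ ≤ eLpNorm (f - g) p (κ ∘ₘ μ) := by
  refine le_of_eq_of_le (eLpNorm_congr_ae ?_) (eLpNorm_integral_kernel_le hp (hf.1.sub hg.1))
  filter_upwards [ae_memLp_of_memLp_comp hf, ae_memLp_of_memLp_comp hg] with x hfx hgx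
  exact (integral_sub (hfx.integrable hp) (hgx.integrable hp)).symm

end KernelAverage

section FixedPoint

variable {X E : Type*} [MeasurableSpace X] [NormedAddCommGroup E] {μ : Measure X} {p : ℝ≥0∞}
  {K : ℝ≥0}

lemma ae_eq_of_eLpNorm_sub_le_mul {f g : X → E} (hp : p ≠ 0) (hf : MemLp f p μ) (hg : MemLp g p μ)
    (hK : K < 1) (h : eLpNorm (f - g) p μ ≤ K * eLpNorm (f - g) p μ) : f =ᵐ[μ] g := by
  have hsub := hf.sub hg
  have hzero : eLpNorm (f - g) p μ = 0 := by
    by_contra hne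
    have hlt : K * eLpNorm (f - g) p μ < 1 * eLpNorm (f - g) p μ :=
      ENNReal.mul_lt_mul_left hne hsub.2.ne (by exact_mod_cast hK)
    exact (hlt.trans_eq (one_mul _)).not_ge h
  exact (sub_ae_eq_zero f g).1 ((eLpNorm_eq_zero_iff hsub.1 hp).1 hzero)

theorem exists_unique_ae_fixedPoint_of_eLpNorm_contraction [CompleteSpace E] (hp : 1 ≤ p)
    {F : (X → E) → X → E} (hmap : ∀ f, MemLp f p μ → MemLp (F f) p μ) (hK : K < 1)
    (hcontr : ∀ f g, MemLp f p μ → MemLp g p μ →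
      eLpNorm (F f - F g) p μ ≤ K * eLpNorm (f - g) p μ) :
    ∃ f₀, StronglyMeasurable f₀ ∧ MemLp f₀ p μ ∧ F f₀ =ᵐ[μ] f₀ ∧
      ∀ f, MemLp f p μ → F f =ᵐ[μ] f → f =ᵐ[μ] f₀ := by
  have : Fact (1 ≤ p) := ⟨hp⟩
  let T : Lp E p μ → Lp E p μ := fun f => (hmap f (Lp.memLp f)).toLp
  have hT : ContractingWith K T := by
    refine ⟨hK, fun f g => ?_⟩
    rw [Lp.edist_toLp_toLp, Lp.edist_def]
    exact hcontr f g (Lp.memLp f) (Lp.memLp g)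
  obtain ⟨f₀, hf₀⟩ : ∃ f₀, T f₀ = f₀ := ⟨hT.fixedPoint, hT.fixedPoint_isFixedPt⟩
  have hfix : F f₀ =ᵐ[μ] f₀ :=
    (hmap f₀ (Lp.memLp f₀)).coeFn_toLp.symm.trans (Lp.ext_iff.1 hf₀)
  refine ⟨f₀, Lp.stronglyMeasurable f₀, Lp.memLp f₀, hfix, fun f hf hFf => ?_⟩
  refine ae_eq_of_eLpNorm_sub_le_mul (zero_lt_one.trans_le hp).ne' hf (Lp.memLp f₀) hK ?_
  exact (eLpNorm_congr_ae (hFf.sub hfix)).symm.trans_le (hcontr f f₀ hf (Lp.memLp f₀))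

end FixedPoint

lemma eLpNorm_inf_sub_inf_le {X E : Type*} [MeasurableSpace X] [NormedAddCommGroup E] [Lattice E]
    [HasSolidNorm E] [IsOrderedAddMonoid E] {μ : Measure X} {p : ℝ≥0∞} (s f g : X → E) :
    eLpNorm (s ⊓ f - s ⊓ g) p μ ≤ eLpNorm (f - g) p μ := by
  refine eLpNorm_mono fun x => ?_
  simpa only [Pi.sub_apply, Pi.inf_apply, inf_comm (s x)] using
    norm_inf_sub_inf_le_norm (f x) (g x) (s x)

section DynamicProgramming

variable {X : Type*} [MeasurableSpace X] {P : Kernel X X} {π : Measure X} {p : ℝ≥0∞}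
  {β : ℝ} {c cs : X → ℝ}

/-- The dynamic programming operator `F Q (x) = c(x) + β ∫ min(c_s(y), Q(y)) P(x,dy)` of optimal
stopping with running cost `c`, stopping cost `c_s` and discount factor `β`, acting on functions
rather than on their classes modulo a measure. -/
noncomputable def dpOperator (P : Kernel X X) (β : ℝ) (c cs Q : X → ℝ) (x : X) : ℝ :=
  c x + β * ∫ y, min (cs y) (Q y) ∂P x

variable [IsMarkovKernel P]

lemma memLp_dpOperator (hP : P.Invariant π) (hp : 1 ≤ p) (hc : MemLp c p π) (hcs : MemLp cs p π)
    {Q : X → ℝ} (hQ : MemLp Q p π) : MemLp (dpOperator P β c cs Q) p π := by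
  have hmin : MemLp (cs ⊓ Q) p (P ∘ₘ π) := hP.def.symm ▸ hcs.inf hQ
  exact hc.add ((memLp_integral_kernel hp hmin).const_mul β)

lemma eLpNorm_dpOperator_sub_le (hP : P.Invariant π) (hp : 1 ≤ p) (hcs : MemLp cs p π)
    {Q R : X → ℝ} (hQ : MemLp Q p π) (hR : MemLp R p π) :
    eLpNorm (dpOperator P β c cs Q - dpOperator P β c cs R) p π ≤ ‖β‖ₑ * eLpNorm (Q - R) p π := by
  have hminQ : MemLp (cs ⊓ Q) p (P ∘ₘ π) := hP.def.symm ▸ hcs.inf hQ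
  have hminR : MemLp (cs ⊓ R) p (P ∘ₘ π) := hP.def.symm ▸ hcs.inf hR
  have hsub : dpOperator P β c cs Q - dpOperator P β c cs R =
      β • fun x => ∫ y, (cs ⊓ Q) y ∂P x - ∫ y, (cs ⊓ R) y ∂P x := by
    funext x
    simp only [dpOperator, Pi.sub_apply, Pi.smul_apply, Pi.inf_apply, smul_eq_mul]
    ring
  rw [hsub, eLpNorm_const_smul]
  gcongr
  calc eLpNorm (fun x => ∫ y, (cs ⊓ Q) y ∂P x - ∫ y, (cs ⊓ R) y ∂P x) p π
      ≤ eLpNorm (cs ⊓ Q - cs ⊓ R) p (P ∘ₘ π) := eLpNorm_integral_kernel_sub_le hp hminQ hminR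
    _ = eLpNorm (cs ⊓ Q - cs ⊓ R) p π := by rw [hP.def]
    _ ≤ eLpNorm (Q - R) p π := eLpNorm_inf_sub_inf_le cs Q R

theorem dp_operator_unique_fixed_point_general (hP : P.Invariant π) (hp : 1 ≤ p) (hβ : |β| < 1)
    (hc : MemLp c p π) (hcs : MemLp cs p π) :
    (∀ Q, MemLp Q p π → MemLp (dpOperator P β c cs Q) p π) ∧
    ∃ Qstar, Measurable Qstar ∧ MemLp Qstar p π ∧ dpOperator P β c cs Qstar =ᵐ[π] Qstar ∧
      ∀ Q, MemLp Q p π → dpOperator P β c cs Q =ᵐ[π] Q → Q =ᵐ[π] Qstar := by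
  have hmap : ∀ Q, MemLp Q p π → MemLp (dpOperator P β c cs Q) p π :=
    fun _ => memLp_dpOperator hP hp hc hcs
  have hK : ‖β‖₊ < 1 := hβ
  obtain ⟨Qstar, hmeas, hQstar⟩ := exists_unique_ae_fixedPoint_of_eLpNorm_contraction hp hmap hK
    fun _ _ => eLpNorm_dpOperator_sub_le hP hp hcs
  exact ⟨hmap, Qstar, hmeas.measurable, hQstar⟩

end DynamicProgramming

/-- The dynamic programming operator
`F Q (x) = c(x) + β ∫ min(c_s(y), Q(y)) P(x,dy)` maps `L²(π)` to itself and has a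
unique fixed point `Q* ∈ L²(π)`: there exists `Q* ∈ L²(π)` with `F Q* = Q*`
(π-almost everywhere), and any two such fixed points agree π-almost everywhere. -/
theorem dp_operator_unique_fixed_point
    {X : Type*} [MeasurableSpace X]
    (P : Kernel X X) [IsMarkovKernel P]
    (π : Measure X) [IsProbabilityMeasure π]
    (hinv : π.bind (fun x => P x) = π)
    (β : ℝ) (hβ : β ∈ Set.Ioo (0 : ℝ) 1)
    (c cs : X → ℝ) (hcm : Measurable c) (hcsm : Measurable cs)
    (hc2 : MemLp c 2 π) (hcs2 : MemLp cs 2 π)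
    (F : (X → ℝ) → (X → ℝ))
    (hF : ∀ Q x, F Q x = c x + β * ∫ y, min (cs y) (Q y) ∂(P x)) :
    -- F maps L²(π) to itself
    (∀ Q : X → ℝ, Measurable Q → MemLp Q 2 π → MemLp (F Q) 2 π) ∧
    -- existence and uniqueness of the fixed point in L²(π)
    (∃ Qstar : X → ℝ, Measurable Qstar ∧ MemLp Qstar 2 π ∧
      F Qstar =ᵐ[π] Qstar ∧
      ∀ Q : X → ℝ, Measurable Q → MemLp Q 2 π → F Q =ᵐ[π] Q →
        Q =ᵐ[π] Qstar) := by
  obtain rfl : F = dpOperator P β c cs := funext₂ hF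
  obtain ⟨hmap, Qstar, hmeas, hQstar, hfix, huniq⟩ := dp_operator_unique_fixed_point_general
    hinv one_le_two (abs_lt.2 ⟨by linarith [hβ.1], hβ.2⟩) hc2 hcs2
  exact ⟨fun Q _ => hmap Q, Qstar, hmeas, hQstar, hfix, fun Q _ => huniq Q⟩
end

section
/- Suppose the covariance matrix Σ_ψ is positive definite and let λ_min > 0 denote its smallest eigenvalue. Then for every θ ∈ ℝ^d, every (complex) eigenvalue λ of the real matrix A(θ) satisfies Re(λ) ≤ −(1 − β) λ_min; in particular all eigenvalues of A(θ) are strictly bounded away from 0, uniformly in θ. -/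
open MeasureTheory ProbabilityTheory Matrix

/-!
For a real vector `v` put `f = vᵀψ`. Then `vᵀ A(θ) v = 𝔼[f(x) (γ(y) f(y) - f(x))]`, where `(x, y)`
is distributed as `π(dx) P(x, dy)` and `γ = β 𝟙{θᵀψ < c_s}`. Both coordinates have law `π`, by
invariance, so Young's inequality and `|γ| ≤ β` bound the cross term by `β 𝔼[f²]`, and
`vᵀ A(θ) v ≤ -(1 - β) vᵀ Σ_ψ v ≤ -(1 - β) λ_min |v|²`. A bound on the quadratic form of a real
matrix bounds the real part of its Hermitian form on complex vectors, hence the real parts of its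
eigenvalues.
-/

section Matrix

variable {n : Type*} [Fintype n]

lemma re_star_dotProduct_map_ofReal_mulVec (M : Matrix n n ℝ) (z : n → ℂ) :
    (star z ⬝ᵥ M.map Complex.ofReal *ᵥ z).re =
      (Complex.re ∘ z) ⬝ᵥ M *ᵥ (Complex.re ∘ z) + (Complex.im ∘ z) ⬝ᵥ M *ᵥ (Complex.im ∘ z) := by
  simp [dotProduct, mulVec, Complex.re_sum, Complex.im_sum, Finset.sum_add_distrib]

variable [DecidableEq n]

open scoped MatrixOrder in
lemma mul_dotProduct_self_le_dotProduct_mulVec {S : Matrix n n ℝ} (hS : S.IsHermitian) {c : ℝ}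
    (hc : c ∈ lowerBounds (spectrum ℝ S)) (v : n → ℝ) : c * (v ⬝ᵥ v) ≤ v ⬝ᵥ S *ᵥ v := by
  have hle : algebraMap ℝ (Matrix n n ℝ) c ≤ S :=
    (algebraMap_le_iff_le_spectrum (a := S) hS).2 fun _ hx => hc hx
  have hnonneg := (Matrix.le_iff.1 hle).dotProduct_mulVec_nonneg v
  simpa only [star_trivial, sub_mulVec, dotProduct_sub, Algebra.algebraMap_eq_smul_one,
    smul_mulVec, one_mulVec, dotProduct_smul, smul_eq_mul, sub_nonneg] using hnonneg

lemma re_le_of_mem_spectrum_of_re_star_dotProduct_mulVec_le {𝕜 : Type*} [RCLike 𝕜]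
    {M : Matrix n n 𝕜} {c : ℝ}
    (hM : ∀ z, RCLike.re (star z ⬝ᵥ M *ᵥ z) ≤ c * RCLike.re (star z ⬝ᵥ z))
    {μ : 𝕜} (hμ : μ ∈ spectrum 𝕜 M) : RCLike.re μ ≤ c := by
  rw [← spectrum_toLin', ← Module.End.hasEigenvalue_iff_mem_spectrum] at hμ
  obtain ⟨z, hz⟩ := hμ.exists_hasEigenvector
  have hMz : M *ᵥ z = μ • z := by simpa only [toLin'_apply] using hz.apply_eq_smul
  open scoped ComplexOrder in
  obtain ⟨hpos, him⟩ := RCLike.pos_iff.1 (dotProduct_star_self_pos_iff.2 hz.2)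
  have hle := hM z
  rw [hMz, dotProduct_smul, smul_eq_mul, RCLike.mul_re, him, mul_zero, sub_zero] at hle
  exact le_of_mul_le_mul_right hle hpos

lemma re_le_of_mem_spectrum_map_ofReal {M : Matrix n n ℝ} {c : ℝ}
    (hM : ∀ v, v ⬝ᵥ M *ᵥ v ≤ c * (v ⬝ᵥ v)) {μ : ℂ}
    (hμ : μ ∈ spectrum ℂ (M.map Complex.ofReal)) : μ.re ≤ c := by
  refine re_le_of_mem_spectrum_of_re_star_dotProduct_mulVec_le (fun z => ?_) hμ
  have hself := re_star_dotProduct_map_ofReal_mulVec 1 z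
  simp only [Matrix.map_one _ Complex.ofReal_zero Complex.ofReal_one, one_mulVec] at hself
  rw [RCLike.re_eq_complex_re, re_star_dotProduct_map_ofReal_mulVec, hself, mul_add]
  exact add_le_add (hM _) (hM _)

end Matrix

section CrossMoment

variable {Ω m n : Type*} [MeasurableSpace Ω]

/-- The matrix `∫ F Gᵀ dμ` of mixed second moments of two random vectors. It expresses both `Σ_ψ`
and `A(θ)`. -/
noncomputable def crossMoment (μ : Measure Ω) (F : Ω → m → ℝ) (G : Ω → n → ℝ) : Matrix m n ℝ :=
  Matrix.of fun i j => ∫ ω, F ω i * G ω j ∂μ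

lemma isHermitian_crossMoment_self (μ : Measure Ω) (F : Ω → n → ℝ) :
    (crossMoment μ F F).IsHermitian :=
  Matrix.IsHermitian.ext fun i j => by simp only [crossMoment, of_apply, star_trivial, mul_comm]

lemma dotProduct_crossMoment_mulVec [Fintype m] [Fintype n] {μ : Measure Ω} {F : Ω → m → ℝ}
    {G : Ω → n → ℝ} (hFG : ∀ i j, Integrable (fun ω => F ω i * G ω j) μ) (u : m → ℝ) (v : n → ℝ) :
    u ⬝ᵥ crossMoment μ F G *ᵥ v = ∫ ω, (u ⬝ᵥ F ω) * (v ⬝ᵥ G ω) ∂μ := by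
  have hterm (i j) : Integrable (fun ω => u i * F ω i * (v j * G ω j)) μ := by
    simpa only [mul_mul_mul_comm] using (hFG i j).const_mul (u i * v j)
  simp only [dotProduct, mulVec, crossMoment, of_apply, Finset.sum_mul_sum]
  rw [integral_finsetSum _ fun i _ => integrable_finsetSum _ fun j _ => hterm i j]
  refine Finset.sum_congr rfl fun i _ => ?_
  rw [Finset.mul_sum, integral_finsetSum _ fun j _ => hterm i j]
  refine Finset.sum_congr rfl fun j _ => ?_
  calc u i * ((∫ ω, F ω i * G ω j ∂μ) * v j)
      = ∫ ω, u i * v j * (F ω i * G ω j) ∂μ := by rw [integral_const_mul]; ring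
    _ = ∫ ω, u i * F ω i * (v j * G ω j) ∂μ := by simp_rw [mul_mul_mul_comm]

lemma memLp_dotProduct [Fintype n] {μ : Measure Ω} {p : ENNReal} {F : Ω → n → ℝ}
    (hF : ∀ i, MemLp (fun ω => F ω i) p μ) (v : n → ℝ) : MemLp (fun ω => v ⬝ᵥ F ω) p μ :=
  memLp_finsetSum _ fun i _ => (hF i).const_mul (v i)

end CrossMoment

section Coupling

variable {Ω X : Type*} [MeasurableSpace Ω] [MeasurableSpace X] {μ : Measure Ω} {π : Measure X}
  {a b : Ω → X} {γ : Ω → ℝ} {β : ℝ}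

lemma integral_comp_of_measurePreserving {E : Type*} [NormedAddCommGroup E] [NormedSpace ℝ E]
    (ha : MeasurePreserving a μ π) {f : X → E} (hf : AEStronglyMeasurable f π) :
    ∫ ω, f (a ω) ∂μ = ∫ x, f x ∂π := by
  rw [← ha.map_eq] at hf ⊢
  exact (integral_map ha.measurable.aemeasurable hf).symm

lemma memLp_mul_of_abs_le {p : ENNReal} {g : Ω → ℝ} (hg : MemLp g p μ)
    (hγ : AEStronglyMeasurable γ μ) (hγβ : ∀ᵐ ω ∂μ, |γ ω| ≤ β) :
    MemLp (fun ω => γ ω * g ω) p μ :=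
  hg.of_le_mul (hγ.mul hg.1) <| hγβ.mono fun ω hω => by
    simpa only [norm_mul, Real.norm_eq_abs] using mul_le_mul_of_nonneg_right hω (abs_nonneg (g ω))

lemma mul_mul_le_of_abs_le {r x y : ℝ} (hr : |r| ≤ β) :
    x * (r * y) ≤ β / 2 * (x ^ 2 + y ^ 2) := by
  calc x * (r * y) ≤ |x * (r * y)| := le_abs_self _
    _ = |r| * (|x| * |y|) := by rw [abs_mul, abs_mul, mul_left_comm]
    _ ≤ β * (|x| * |y|) := by gcongr
    _ ≤ β * ((x ^ 2 + y ^ 2) / 2) := by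
        have hβ : 0 ≤ β := (abs_nonneg r).trans hr
        gcongr
        linarith [two_mul_le_add_sq |x| |y|, sq_abs x, sq_abs y]
    _ = β / 2 * (x ^ 2 + y ^ 2) := by ring

lemma integral_mul_mul_comp_le (ha : MeasurePreserving a μ π) (hb : MeasurePreserving b μ π)
    (hγ : AEStronglyMeasurable γ μ) (hγβ : ∀ᵐ ω ∂μ, |γ ω| ≤ β) {f : X → ℝ} (hf : MemLp f 2 π) :
    ∫ ω, f (a ω) * (γ ω * f (b ω)) ∂μ ≤ β * ∫ x, f x ^ 2 ∂π := by
  have hfa : MemLp (fun ω => f (a ω)) 2 μ := hf.comp_measurePreserving ha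
  have hfb : MemLp (fun ω => f (b ω)) 2 μ := hf.comp_measurePreserving hb
  calc ∫ ω, f (a ω) * (γ ω * f (b ω)) ∂μ
      ≤ ∫ ω, β / 2 * (f (a ω) ^ 2 + f (b ω) ^ 2) ∂μ :=
        integral_mono_ae (hfa.integrable_mul (memLp_mul_of_abs_le hfb hγ hγβ))
          ((hfa.integrable_sq.add hfb.integrable_sq).const_mul _)
          (hγβ.mono fun _ => mul_mul_le_of_abs_le)
    _ = β * ∫ x, f x ^ 2 ∂π := by
        rw [integral_const_mul, integral_add hfa.integrable_sq hfb.integrable_sq,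
          integral_comp_of_measurePreserving ha hf.integrable_sq.aestronglyMeasurable,
          integral_comp_of_measurePreserving hb hf.integrable_sq.aestronglyMeasurable]
        ring

lemma integral_mul_mul_comp_sub_le (ha : MeasurePreserving a μ π) (hb : MeasurePreserving b μ π)
    (hγ : AEStronglyMeasurable γ μ) (hγβ : ∀ᵐ ω ∂μ, |γ ω| ≤ β) {f : X → ℝ} (hf : MemLp f 2 π) :
    ∫ ω, f (a ω) * (γ ω * f (b ω) - f (a ω)) ∂μ ≤ -(1 - β) * ∫ x, f x ^ 2 ∂π := by
  have hfa : MemLp (fun ω => f (a ω)) 2 μ := hf.comp_measurePreserving ha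
  have hfb : MemLp (fun ω => f (b ω)) 2 μ := hf.comp_measurePreserving hb
  have hcross : Integrable (fun ω => f (a ω) * (γ ω * f (b ω))) μ :=
    hfa.integrable_mul (memLp_mul_of_abs_le hfb hγ hγβ)
  simp only [mul_sub, ← sq]
  rw [integral_sub hcross hfa.integrable_sq,
    integral_comp_of_measurePreserving ha hf.integrable_sq.aestronglyMeasurable]
  linarith [integral_mul_mul_comp_le ha hb hγ hγβ hf]

variable {n : Type*} {ψ : X → n → ℝ}

/-- The temporal-difference matrix `∫ ψ(a) (γ ψ(b) - ψ(a))ᵀ dμ` of the features `ψ` along random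
transitions from `a ω` to `b ω` with discount factor `γ ω`. It is `A(θ)` for the two coordinates
under `μ = π(dx) P(x, dy)` and `γ = β 𝟙{θᵀψ(y) < c_s(y)}`. -/
noncomputable def tdMatrix (μ : Measure Ω) (a b : Ω → X) (γ : Ω → ℝ) (ψ : X → n → ℝ) :
    Matrix n n ℝ :=
  crossMoment μ (fun ω => ψ (a ω)) fun ω => γ ω • ψ (b ω) - ψ (a ω)

lemma integrable_mul_mul_comp_sub (ha : MeasurePreserving a μ π) (hb : MeasurePreserving b μ π)
    (hγ : AEStronglyMeasurable γ μ) (hγβ : ∀ᵐ ω ∂μ, |γ ω| ≤ β)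
    (hψ : ∀ i, MemLp (fun x => ψ x i) 2 π) (i j : n) :
    Integrable (fun ω => ψ (a ω) i * (γ ω * ψ (b ω) j - ψ (a ω) j)) μ :=
  ((hψ i).comp_measurePreserving ha).integrable_mul <|
    (memLp_mul_of_abs_le ((hψ j).comp_measurePreserving hb) hγ hγβ).sub
      ((hψ j).comp_measurePreserving ha)

variable [Fintype n]

lemma dotProduct_tdMatrix_mulVec_le (ha : MeasurePreserving a μ π) (hb : MeasurePreserving b μ π)
    (hγ : AEStronglyMeasurable γ μ) (hγβ : ∀ᵐ ω ∂μ, |γ ω| ≤ β)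
    (hψ : ∀ i, MemLp (fun x => ψ x i) 2 π) (v : n → ℝ) :
    v ⬝ᵥ tdMatrix μ a b γ ψ *ᵥ v ≤ -(1 - β) * (v ⬝ᵥ crossMoment π ψ ψ *ᵥ v) := by
  rw [tdMatrix, dotProduct_crossMoment_mulVec (G := fun ω => γ ω • ψ (b ω) - ψ (a ω))
      (integrable_mul_mul_comp_sub ha hb hγ hγβ hψ),
    dotProduct_crossMoment_mulVec fun i j => (hψ i).integrable_mul (hψ j)]
  simpa only [dotProduct_sub, dotProduct_smul, smul_eq_mul, sq] using
    integral_mul_mul_comp_sub_le ha hb hγ hγβ (memLp_dotProduct hψ v)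

lemma re_le_of_mem_spectrum_tdMatrix [DecidableEq n] (ha : MeasurePreserving a μ π)
    (hb : MeasurePreserving b μ π) (hγ : AEStronglyMeasurable γ μ) (hγβ : ∀ᵐ ω ∂μ, |γ ω| ≤ β)
    (hβ : β ≤ 1) (hψ : ∀ i, MemLp (fun x => ψ x i) 2 π) {c : ℝ}
    (hc : c ∈ lowerBounds (spectrum ℝ (crossMoment π ψ ψ))) {lam : ℂ}
    (hlam : lam ∈ spectrum ℂ ((tdMatrix μ a b γ ψ).map Complex.ofReal)) :
    lam.re ≤ -((1 - β) * c) := by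
  refine re_le_of_mem_spectrum_map_ofReal (fun v => ?_) hlam
  calc v ⬝ᵥ tdMatrix μ a b γ ψ *ᵥ v
      ≤ -(1 - β) * (v ⬝ᵥ crossMoment π ψ ψ *ᵥ v) := dotProduct_tdMatrix_mulVec_le ha hb hγ hγβ hψ v
    _ ≤ -(1 - β) * (c * (v ⬝ᵥ v)) :=
        mul_le_mul_of_nonpos_left
          (mul_dotProduct_self_le_dotProduct_mulVec (isHermitian_crossMoment_self π ψ) hc v)
          (by linarith)
    _ = -((1 - β) * c) * (v ⬝ᵥ v) := by ring

end Coupling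

section StationaryChain

variable {X : Type*} [MeasurableSpace X] {P : Kernel X X} {π : Measure X} [SFinite π]

lemma measurePreserving_fst_compProd [IsMarkovKernel P] :
    MeasurePreserving Prod.fst (π ⊗ₘ P) π :=
  ⟨measurable_fst, Measure.fst_compProd π P⟩

lemma measurePreserving_snd_compProd [IsSFiniteKernel P] (hinv : P.Invariant π) :
    MeasurePreserving Prod.snd (π ⊗ₘ P) π :=
  ⟨measurable_snd, (Measure.snd_compProd π P).trans hinv⟩

theorem Atheta_eigenvalues_bounded_away_general [IsMarkovKernel P]
    {n : Type*} [Fintype n] [DecidableEq n]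
    (hinv : P.Invariant π) {β : ℝ} (hβ : β ≤ 1) {γ : X × X → ℝ}
    (hγ : AEStronglyMeasurable γ (π ⊗ₘ P)) (hγβ : ∀ᵐ p ∂(π ⊗ₘ P), |γ p| ≤ β)
    {ψ : X → n → ℝ} (hψ : ∀ i, MemLp (fun x => ψ x i) 2 π) {A S : Matrix n n ℝ}
    (hA : ∀ i j, A i j = ∫ x, ∫ y, ψ x i * (γ (x, y) * ψ y j - ψ x j) ∂(P x) ∂π)
    (hS : ∀ i j, S i j = ∫ x, ψ x i * ψ x j ∂π)
    {c : ℝ} (hc : c ∈ lowerBounds (spectrum ℝ S))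
    {lam : ℂ} (hlam : lam ∈ spectrum ℂ (A.map Complex.ofReal)) : lam.re ≤ -((1 - β) * c) := by
  have hfst : MeasurePreserving Prod.fst (π ⊗ₘ P) π := measurePreserving_fst_compProd
  have hsnd : MeasurePreserving Prod.snd (π ⊗ₘ P) π := measurePreserving_snd_compProd hinv
  obtain rfl : S = crossMoment π ψ ψ := Matrix.ext hS
  obtain rfl : A = tdMatrix (π ⊗ₘ P) Prod.fst Prod.snd γ ψ := Matrix.ext fun i j => by
    rw [hA, ← Measure.integral_compProd (integrable_mul_mul_comp_sub hfst hsnd hγ hγβ hψ i j)]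
    rfl
  exact re_le_of_mem_spectrum_tdMatrix hfst hsnd hγ hγβ hβ hψ hc hlam

end StationaryChain

lemma measurable_ite_dotProduct_lt {X n : Type*} [MeasurableSpace X] [Fintype n] {ψ : X → n → ℝ}
    (hψ : Measurable ψ) {f : X → ℝ} (hf : Measurable f) (θ : n → ℝ) (β : ℝ) :
    Measurable fun y => if θ ⬝ᵥ ψ y < f y then β else 0 := by
  refine Measurable.ite (measurableSet_lt ?_ hf) measurable_const measurable_const
  unfold dotProduct
  fun_prop

/-- Suppose `Σ_ψ = ∫ ψ ψᵀ dπ` is positive definite with smallest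
eigenvalue `λ_min > 0`.  Then for every `θ ∈ ℝ^d`, every (complex) eigenvalue `λ`
of the real matrix `A(θ)` satisfies `Re(λ) ≤ −(1 − β) λ_min`; in particular all
eigenvalues of `A(θ)` are strictly bounded away from `0`, uniformly in `θ`. -/
theorem Atheta_eigenvalues_bounded_away
    {X : Type*} [MeasurableSpace X] {d : ℕ}
    (P : Kernel X X) [IsMarkovKernel P]
    (π : Measure X) [IsProbabilityMeasure π]
    (hinv : π.bind (fun x => P x) = π)
    (β : ℝ) (hβ : β ∈ Set.Ioo (0 : ℝ) 1)
    (cs : X → ℝ) (hcsm : Measurable cs)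
    (ψ : X → Fin d → ℝ) (hψm : Measurable ψ)
    (hψ2 : ∀ i, MemLp (fun x => ψ x i) 2 π)
    (A : (Fin d → ℝ) → Matrix (Fin d) (Fin d) ℝ)
    (hA : ∀ θ i j, A θ i j =
      ∫ x, ∫ y, ψ x i * (β * (if θ ⬝ᵥ ψ y < cs y then ψ y j else 0) - ψ x j)
        ∂(P x) ∂π)
    (Sψ : Matrix (Fin d) (Fin d) ℝ)
    (hSψ : ∀ i j, Sψ i j = ∫ x, ψ x i * ψ x j ∂π)
    (hpd : Sψ.PosDef)
    (lammin : ℝ) (hlammin : IsLeast (spectrum ℝ Sψ) lammin)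
    (hlampos : 0 < lammin) :
    ∀ (θ : Fin d → ℝ) (lam : ℂ),
      lam ∈ spectrum ℂ ((A θ).map (Complex.ofReal : ℝ → ℂ)) →
        lam.re ≤ -((1 - β) * lammin) := by
  intro θ lam hlam
  exact Atheta_eigenvalues_bounded_away_general (γ := fun p => if θ ⬝ᵥ ψ p.2 < cs p.2 then β else 0)
    hinv hβ.2.le
    ((measurable_ite_dotProduct_lt hψm hcsm θ β).comp measurable_snd).aestronglyMeasurable
    (.of_forall fun p => by split_ifs <;> simp [abs_of_pos hβ.1, hβ.1.le])
    hψ2 (by simpa only [mul_ite, ite_mul, mul_zero, zero_mul] using hA θ) hSψ hlammin.2 hlam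
end

section
/- Suppose the Markov kernel P with invariant probability measure π is uniformly ergodic with constants D < ∞ and ρ ∈ (0,1), i.e., |Pⁿ(x,A) − π(A)| ≤ D ρⁿ for all x, A, n ≥ 1. Let {f_θ : θ ∈ ℝ^d} be a family of measurable functions f_θ : X → ℝ^d with ∫ f_θ dπ = 0 for every θ, sup_x ‖f_θ(x)‖ ≤ B_F for all θ, and sup_x ‖f_{θ¹}(x) − f_{θ²}(x)‖ ≤ ℓ_F ‖θ¹ − θ²‖ for all θ¹, θ². Then the Poisson solutions f̂_θ(x) = Σ_{n=0}^∞ Pⁿf_θ(x) are well defined and satisfy, with B_Z = 1 + 2D/(1−ρ): sup_x ‖f̂_{θ¹}(x) − f̂_{θ²}(x)‖ ≤ B_Z ℓ_F ‖θ¹ − θ²‖ for all θ¹, θ² ∈ ℝ^d. -/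
open MeasureTheory ProbabilityTheory

/-- The `n`-step kernel `Pⁿ` of a Markov kernel `P` (with `P⁰` the identity). -/
noncomputable def kernelIter {X : Type*} [MeasurableSpace X]
    (P : Kernel X X) : ℕ → Kernel X X
  | 0 => Kernel.id
  | n + 1 => P ∘ₖ kernelIter P n

/-- The Euclidean norm on `ℝ^d` (vectors as functions `Fin d → ℝ`). -/
noncomputable def euclNorm {d : ℕ} (v : Fin d → ℝ) : ℝ :=
  Real.sqrt (∑ i, v i ^ 2)

/-!
If two measures differ by at most `ε` on every event, then the Hahn decomposition of their
difference shows that the integrals of a function bounded by `C` differ by at most `2 * C * ε`.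
For a `π`-centred `g` this gives `‖Pⁿ g‖ ≤ 2 * C * D * ρ ^ n` for `n ≥ 1`, while `‖P⁰ g‖ ≤ C`;
summing the geometric series bounds the Poisson solution of `g` by `(1 + 2 * D / (1 - ρ)) * C`.
The solution is linear in `g`, so the Lipschitz estimate is this bound for `g = f θ₁ - f θ₂`.
-/

section

variable {X E : Type*} [MeasurableSpace X] [NormedAddCommGroup E]

section TotalVariation

variable {μ ν : Measure X} [IsFiniteMeasure μ] {g : X → E} {C : ℝ}

lemma integrable_of_norm_le (hg : StronglyMeasurable g) (hC : ∀ x, ‖g x‖ ≤ C) : Integrable g μ :=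
  .of_bound hg.aestronglyMeasurable C (ae_of_all _ hC)

variable [NormedSpace ℝ E]

lemma norm_integral_sub_integral_le_of_le (hνμ : ν ≤ μ) (hg : Integrable g μ)
    (hC : ∀ x, ‖g x‖ ≤ C) :
    ‖∫ x, g x ∂μ - ∫ x, g x ∂ν‖ ≤ C * (μ.real Set.univ - ν.real Set.univ) := by
  have : IsFiniteMeasure ν := isFiniteMeasure_of_le μ hνμ
  have hμ : μ - ν + ν = μ := Measure.sub_add_cancel_of_le hνμ
  have hint : ∫ x, g x ∂μ = ∫ x, g x ∂(μ - ν) + ∫ x, g x ∂ν := by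
    rw [← integral_add_measure (hg.mono_measure Measure.sub_le) (hg.mono_measure hνμ), hμ]
  have hmass : μ.real Set.univ = (μ - ν).real Set.univ + ν.real Set.univ := by
    rw [← measureReal_add_apply, hμ]
  rw [hint, hmass, add_sub_cancel_right, add_sub_cancel_right]
  exact norm_integral_le_of_norm_le_const (ae_of_all _ hC)

lemma norm_integral_sub_integral_le [IsFiniteMeasure ν] {ε : ℝ}
    (hε : ∀ A, MeasurableSet A → |μ.real A - ν.real A| ≤ ε)
    (hg : StronglyMeasurable g) (hC₀ : 0 ≤ C) (hC : ∀ x, ‖g x‖ ≤ C) :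
    ‖∫ x, g x ∂μ - ∫ x, g x ∂ν‖ ≤ 2 * C * ε := by
  obtain ⟨s, hs⟩ := exists_isHahnDecomposition μ ν
  have hμ : Integrable g μ := integrable_of_norm_le hg hC
  have hν : Integrable g ν := integrable_of_norm_le hg hC
  have on_s : ‖∫ x in s, g x ∂ν - ∫ x in s, g x ∂μ‖ ≤ C * ε := by
    refine (norm_integral_sub_integral_le_of_le hs.le_on hν.restrict hC).trans ?_
    simp only [measureReal_restrict_apply_univ]
    gcongr
    exact (le_abs_self _).trans ((abs_sub_comm _ _).trans_le (hε s hs.measurableSet))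
  have on_compl : ‖∫ x in sᶜ, g x ∂μ - ∫ x in sᶜ, g x ∂ν‖ ≤ C * ε := by
    refine (norm_integral_sub_integral_le_of_le hs.ge_on_compl hμ.restrict hC).trans ?_
    simp only [measureReal_restrict_apply_univ]
    gcongr
    exact (le_abs_self _).trans (hε sᶜ hs.measurableSet.compl)
  calc ‖∫ x, g x ∂μ - ∫ x, g x ∂ν‖
      = ‖(∫ x in sᶜ, g x ∂μ - ∫ x in sᶜ, g x ∂ν)
          - (∫ x in s, g x ∂ν - ∫ x in s, g x ∂μ)‖ := by
        rw [← integral_add_compl hs.measurableSet hμ, ← integral_add_compl hs.measurableSet hν]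
        congr 1
        abel
    _ ≤ C * ε + C * ε := norm_sub_le_of_le on_compl on_s
    _ = 2 * C * ε := by ring

end TotalVariation

variable [NormedSpace ℝ E]

instance isMarkovKernel_kernelIter (P : Kernel X X) [IsMarkovKernel P] (n : ℕ) :
    IsMarkovKernel (kernelIter P n) := by
  induction n with
  | zero => rw [kernelIter]; infer_instance
  | succ n ih => rw [kernelIter]; infer_instance

/-- Uniform ergodicity of the kernel `P` with limit `π`, in the quantitative form
`|Pⁿ(x, A) - π(A)| ≤ D ρⁿ` for all `n ≥ 1`, states `x` and events `A`. -/
def UniformlyErgodic (P : Kernel X X) (π : Measure X) (D ρ : ℝ) : Prop :=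
  ∀ n : ℕ, 1 ≤ n → ∀ (x : X) (A : Set X), MeasurableSet A →
    |(kernelIter P n x).real A - π.real A| ≤ D * ρ ^ n

/-- The series `Σ_{n ≥ 0} Pⁿ g (x)`, which solves the Poisson equation `h - P h = g` for a
centred `g`. It is `0` by convention where the series diverges. -/
noncomputable def poissonSolution (P : Kernel X X) (g : X → E) (x : X) : E :=
  ∑' n : ℕ, ∫ y, g y ∂(kernelIter P n x)

namespace UniformlyErgodic

variable {P : Kernel X X} {π : Measure X} {D ρ : ℝ} {g g₁ g₂ : X → E} {C : ℝ}

lemma const_nonneg [Nonempty X] (h : UniformlyErgodic P π D ρ) (hρ : 0 < ρ) : 0 ≤ D := by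
  have := (abs_nonneg _).trans (h 1 le_rfl (Classical.arbitrary X) ∅ .empty)
  rw [pow_one] at this
  exact nonneg_of_mul_nonneg_left this hρ

variable [IsMarkovKernel P] [IsFiniteMeasure π]

lemma norm_integral_kernelIter_succ_le (h : UniformlyErgodic P π D ρ) (hρ : ρ ∈ Set.Ioo 0 1)
    (hg : StronglyMeasurable g) (hC : ∀ x, ‖g x‖ ≤ C) (hg₀ : ∫ x, g x ∂π = 0) (n : ℕ) (x : X) :
    ‖∫ y, g y ∂(kernelIter P (n + 1) x)‖ ≤ 2 * C * D * ρ ^ n := by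
  have : Nonempty X := ⟨x⟩
  have hC₀ : 0 ≤ C := (norm_nonneg _).trans (hC x)
  have hD : 0 ≤ D := h.const_nonneg hρ.1
  calc ‖∫ y, g y ∂(kernelIter P (n + 1) x)‖
      = ‖∫ y, g y ∂(kernelIter P (n + 1) x) - ∫ y, g y ∂π‖ := by rw [hg₀, sub_zero]
    _ ≤ 2 * C * (D * ρ ^ (n + 1)) :=
        norm_integral_sub_integral_le (h (n + 1) n.succ_pos x) hg hC₀ hC
    _ ≤ 2 * C * (D * ρ ^ n) := by
        gcongr 2 * C * (D * ?_)
        exact pow_le_pow_of_le_one hρ.1.le hρ.2.le n.le_succ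
    _ = 2 * C * D * ρ ^ n := by ring

variable [CompleteSpace E]

lemma summable_integral_kernelIter (h : UniformlyErgodic P π D ρ) (hρ : ρ ∈ Set.Ioo 0 1)
    (hg : StronglyMeasurable g) (hC : ∀ x, ‖g x‖ ≤ C) (hg₀ : ∫ x, g x ∂π = 0) (x : X) :
    Summable fun n : ℕ => ∫ y, g y ∂(kernelIter P n x) :=
  (summable_nat_add_iff 1).1 <|
    ((summable_geometric_of_lt_one hρ.1.le hρ.2).mul_left (2 * C * D)).of_norm_bounded
      fun n => h.norm_integral_kernelIter_succ_le hρ hg hC hg₀ n x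

lemma norm_poissonSolution_le (h : UniformlyErgodic P π D ρ) (hρ : ρ ∈ Set.Ioo 0 1)
    (hg : StronglyMeasurable g) (hC : ∀ x, ‖g x‖ ≤ C) (hg₀ : ∫ x, g x ∂π = 0) (x : X) :
    ‖poissonSolution P g x‖ ≤ (1 + 2 * D / (1 - ρ)) * C := by
  have head : ‖∫ y, g y ∂(kernelIter P 0 x)‖ ≤ C := by
    simpa only [probReal_univ, mul_one] using
      norm_integral_le_of_norm_le_const (μ := kernelIter P 0 x) (ae_of_all _ hC)
  have tail : ‖∑' n : ℕ, ∫ y, g y ∂(kernelIter P (n + 1) x)‖ ≤ 2 * C * D * (1 - ρ)⁻¹ :=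
    tsum_of_norm_bounded ((hasSum_geometric_of_lt_one hρ.1.le hρ.2).mul_left _)
      fun n => h.norm_integral_kernelIter_succ_le hρ hg hC hg₀ n x
  rw [poissonSolution, (h.summable_integral_kernelIter hρ hg hC hg₀ x).tsum_eq_zero_add]
  calc _ ≤ C + 2 * C * D * (1 - ρ)⁻¹ := norm_add_le_of_le head tail
    _ = (1 + 2 * D / (1 - ρ)) * C := by ring

lemma poissonSolution_sub (h : UniformlyErgodic P π D ρ) (hρ : ρ ∈ Set.Ioo 0 1)
    (hg₁ : StronglyMeasurable g₁) (hg₂ : StronglyMeasurable g₂)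
    {C₁ C₂ : ℝ} (hC₁ : ∀ x, ‖g₁ x‖ ≤ C₁) (hC₂ : ∀ x, ‖g₂ x‖ ≤ C₂)
    (hg₁₀ : ∫ x, g₁ x ∂π = 0) (hg₂₀ : ∫ x, g₂ x ∂π = 0) (x : X) :
    poissonSolution P (g₁ - g₂) x = poissonSolution P g₁ x - poissonSolution P g₂ x := by
  unfold poissonSolution
  rw [← (h.summable_integral_kernelIter hρ hg₁ hC₁ hg₁₀ x).tsum_sub
    (h.summable_integral_kernelIter hρ hg₂ hC₂ hg₂₀ x)]
  exact tsum_congr fun n =>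
    integral_sub (integrable_of_norm_le hg₁ hC₁) (integrable_of_norm_le hg₂ hC₂)

end UniformlyErgodic

theorem poisson_solutions_uniformly_lipschitz_general [CompleteSpace E]
    {Θ : Type*} [PseudoMetricSpace Θ]
    {P : Kernel X X} [IsMarkovKernel P] {π : Measure X} [IsFiniteMeasure π]
    {D ρ : ℝ} (hρ : ρ ∈ Set.Ioo 0 1) (hP : UniformlyErgodic P π D ρ)
    {f : Θ → X → E} (hfm : ∀ θ, StronglyMeasurable (f θ)) (hf₀ : ∀ θ, ∫ x, f θ x ∂π = 0)
    (hfb : ∀ θ, ∃ B, ∀ x, ‖f θ x‖ ≤ B)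
    {ℓ : ℝ} (hf_lip : ∀ θ₁ θ₂ x, ‖f θ₁ x - f θ₂ x‖ ≤ ℓ * dist θ₁ θ₂) :
    (∀ θ x, Summable fun n : ℕ => ∫ y, f θ y ∂(kernelIter P n x)) ∧
    ∀ θ₁ θ₂ x, ‖poissonSolution P (f θ₁) x - poissonSolution P (f θ₂) x‖ ≤
      (1 + 2 * D / (1 - ρ)) * ℓ * dist θ₁ θ₂ := by
  choose B hB using hfb
  refine ⟨fun θ => hP.summable_integral_kernelIter hρ (hfm θ) (hB θ) (hf₀ θ),
    fun θ₁ θ₂ x => ?_⟩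
  have centred : ∫ y, (f θ₁ - f θ₂) y ∂π = 0 := by
    rw [integral_sub' (integrable_of_norm_le (hfm θ₁) (hB θ₁))
      (integrable_of_norm_le (hfm θ₂) (hB θ₂)), hf₀, hf₀, sub_zero]
  rw [← hP.poissonSolution_sub hρ (hfm θ₁) (hfm θ₂) (hB θ₁) (hB θ₂) (hf₀ θ₁) (hf₀ θ₂), mul_assoc]
  exact hP.norm_poissonSolution_le hρ ((hfm θ₁).sub (hfm θ₂)) (hf_lip θ₁ θ₂) centred x

lemma euclNorm_eq_norm_toLp {d : ℕ} (v : Fin d → ℝ) : euclNorm v = ‖WithLp.toLp 2 v‖ := by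
  simp only [euclNorm, EuclideanSpace.norm_eq, Real.norm_eq_abs, sq_abs]

lemma stronglyMeasurable_toLp {ι : Type*} [Finite ι] {g : X → ι → ℝ}
    (hg : ∀ i, Measurable fun x => g x i) : StronglyMeasurable fun x => WithLp.toLp 2 (g x) :=
  ((WithLp.measurable_toLp 2 _).comp (measurable_pi_lambda _ hg)).stronglyMeasurable

lemma hasSum_integral_eval {α ι : Type*} [Fintype ι] {μ : α → Measure X}
    {g : X → EuclideanSpace ℝ ι} (hg : ∀ a, Integrable g (μ a)) {z : EuclideanSpace ℝ ι}
    (h : HasSum (fun a => ∫ y, g y ∂(μ a)) z) (i : ι) :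
    HasSum (fun a => ∫ y, g y i ∂(μ a)) (z i) := by
  simpa only [PiLp.proj_apply, eval_integral_piLp (hg _).eval_piLp] using
    h.mapL (EuclideanSpace.proj (𝕜 := ℝ) i)

end

/-- Suppose `P` with invariant probability measure `π` is
uniformly ergodic with constants `D`, `ρ`.  Let `{f_θ}` be a family of
zero-mean (w.r.t. `π`) measurable functions `X → ℝ^d`, uniformly bounded by
`B_F` and uniformly Lipschitz in `θ` with constant `ℓ_F`.  Then the Poisson
solutions `f̂_θ(x) = Σ_{n≥0} Pⁿ f_θ(x)` are well defined and satisfy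
`sup_x ‖f̂_{θ¹}(x) − f̂_{θ²}(x)‖ ≤ B_Z ℓ_F ‖θ¹ − θ²‖` with
`B_Z = 1 + 2D/(1−ρ)`. -/
theorem poisson_solutions_uniformly_lipschitz
    {X : Type*} [MeasurableSpace X] {d : ℕ}
    (P : Kernel X X) [IsMarkovKernel P]
    (π : Measure X) [IsProbabilityMeasure π]
    (hinv : π.bind (fun x => P x) = π)
    (D ρ : ℝ) (hρ : ρ ∈ Set.Ioo (0 : ℝ) 1)
    (herg : ∀ n : ℕ, 1 ≤ n → ∀ (x : X) (A : Set X), MeasurableSet A →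
      |(kernelIter P n x A).toReal - (π A).toReal| ≤ D * ρ ^ n)
    (f : (Fin d → ℝ) → X → (Fin d → ℝ))
    (hfm : ∀ (θ : Fin d → ℝ) (i : Fin d), Measurable fun x => f θ x i)
    (B_F ℓ_F : ℝ)
    (hf0 : ∀ (θ : Fin d → ℝ) (i : Fin d), ∫ x, f θ x i ∂π = 0)
    (hfb : ∀ (θ : Fin d → ℝ) (x : X), euclNorm (f θ x) ≤ B_F)
    (hflip : ∀ (θ₁ θ₂ : Fin d → ℝ) (x : X),
      euclNorm (f θ₁ x - f θ₂ x) ≤ ℓ_F * euclNorm (θ₁ - θ₂)) :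
    -- the Poisson solutions are well defined (the series converges)
    (∀ (θ : Fin d → ℝ) (x : X) (i : Fin d),
      Summable fun n : ℕ => ∫ y, f θ y i ∂(kernelIter P n x)) ∧
    -- uniform Lipschitz bound with constant B_Z ℓ_F, B_Z = 1 + 2D/(1−ρ)
    (∀ (θ₁ θ₂ : Fin d → ℝ) (x : X),
      euclNorm (fun i =>
          (∑' n : ℕ, ∫ y, f θ₁ y i ∂(kernelIter P n x)) -
          (∑' n : ℕ, ∫ y, f θ₂ y i ∂(kernelIter P n x))) ≤
        (1 + 2 * D / (1 - ρ)) * ℓ_F * euclNorm (θ₁ - θ₂)) := by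
  simp only [euclNorm_eq_norm_toLp, WithLp.toLp_sub] at hfb hflip ⊢
  let F (θ : EuclideanSpace ℝ (Fin d)) (x : X) : EuclideanSpace ℝ (Fin d) :=
    WithLp.toLp 2 (f θ.ofLp x)
  have hFm (θ) : StronglyMeasurable (F θ) := stronglyMeasurable_toLp (hfm θ.ofLp)
  have hFi (μ : Measure X) [IsProbabilityMeasure μ] (θ) : Integrable (F θ) μ :=
    integrable_of_norm_le (hFm θ) (hfb θ.ofLp)
  have hF₀ (θ) : ∫ x, F θ x ∂π = 0 := by
    ext i
    exact (eval_integral_piLp (hFi π θ).eval_piLp i).trans (hf0 θ.ofLp i)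
  have hF_lip (θ₁ θ₂) (x : X) : ‖F θ₁ x - F θ₂ x‖ ≤ ℓ_F * dist θ₁ θ₂ := by
    simpa only [dist_eq_norm] using hflip θ₁.ofLp θ₂.ofLp x
  obtain ⟨hsum, hlip⟩ := poisson_solutions_uniformly_lipschitz_general hρ herg hFm hF₀
    (fun θ => ⟨B_F, hfb θ.ofLp⟩) hF_lip
  have hcoord (θ) (x : X) (i : Fin d) :
      HasSum (fun n => ∫ y, f θ y i ∂(kernelIter P n x))
        (poissonSolution P (F (WithLp.toLp 2 θ)) x i) :=
    hasSum_integral_eval (fun n => hFi (kernelIter P n x) _) (hsum _ x).hasSum i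
  refine ⟨fun θ x i => (hcoord θ x i).summable, fun θ₁ θ₂ x => ?_⟩
  simp only [(hcoord _ x _).tsum_eq, ← dist_eq_norm (WithLp.toLp 2 θ₁)]
  exact hlip _ _ x
end
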